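/- Let T = {2341, 2431, 3241} (patterns of length 4). Then for every n ≥ 1 the number of permutations of length n avoiding all patterns in T is |S_n(T)| = ∑_{i=1}^{n} (1/i)·binom(n-1, i-1)·binom(2n-i, i-1). Equivalently, the generating function F_T(x) = ∑_{n≥0} |S_n(T)| x^n satisfies, as formal power series over ℚ, (1 - x·F_T(x)^2)·(F_T(x) - 1) = x·F_T(x). -/

import Mathlib

open PowerSeries

/-- A permutation `π` of `{0,…,n-1}` contains the pattern `σ` (of length `k`) if there is an
order-embedding of positions on which the values of `π` appear in the same relative order as
the values of `σ`. -/
def ContainsPattern {n k : ℕ} (π : Equiv.Perm (Fin n)) (σ : Fin k → Fin k) : Prop :=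
  ∃ f : Fin k ↪o Fin n, ∀ a b : Fin k, σ a < σ b ↔ π (f a) < π (f b)

/-- The number of permutations of length `n` avoiding every pattern in `T`. -/
noncomputable def avoiderCount (T : Set (Fin 4 → Fin 4)) (n : ℕ) : ℕ :=
  Nat.card {π : Equiv.Perm (Fin n) // ∀ σ ∈ T, ¬ ContainsPattern π σ}

/-- The generating function `F_T(x) = ∑_n |S_n(T)| xⁿ` over `ℚ`. -/
noncomputable def avoiderGF (T : Set (Fin 4 → Fin 4)) : PowerSeries ℚ :=
  PowerSeries.mk fun n => (avoiderCount T n : ℚ)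

/-- The generating function of the Catalan numbers over `ℚ`. -/
noncomputable def catalanGF : PowerSeries ℚ :=
  PowerSeries.mk fun n => (catalan n : ℚ)


theorem lag_two (P : PowerSeries ℚ) : (2:ℚ) • P = 2 * P := by
  rw [two_smul, two_mul]

theorem lag_main (G : PowerSeries ℚ) (hG : G = X * (1 + 2 * G + 2 * G^2 + G^3)) (n k : ℕ) :
    ((n + 1 : ℕ) : ℚ) * coeff (n+1) (G^k) =
      k * coeff (n+1) (X^k * (1 + 2 * X + 2 * X^2 + X^3 : PowerSeries ℚ)^(n+1)) := by
  have h0 : constantCoeff G = 0 := by rw [hG]; simp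
  have hstep : ∀ n k, coeff (n+1) (G^(k+1)) = coeff n (G^k) + 2 * coeff n (G^(k+1))
      + 2 * coeff n (G^(k+2)) + coeff n (G^(k+3)) := by
    intro n k
    have : G^(k+1) = X * (G^k + (2:ℚ) • G^(k+1) + (2:ℚ) • G^(k+2) + G^(k+3)) := by
      simp only [lag_two]
      linear_combination G^k * hG
    have this := congrArg (coeff (n+1)) this
    rw [coeff_succ_X_mul] at this
    rw [this]
    simp only [map_add, coeff_smul, smul_eq_mul]
  induction n generalizing k with
  | zero =>
    cases k with
    | zero => simp
    | succ k =>
      rw [hstep, pow_succ' X, mul_assoc, coeff_succ_X_mul]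
      cases k with
      | zero => simp [h0]
      | succ k => simp [h0]
  | succ n ih =>
    cases k with
    | zero => simp [coeff_one]
    | succ k =>
      set φ : PowerSeries ℚ := 1 + 2 * X + 2 * X^2 + X^3 with hφ
      rw [hstep, pow_succ' X, mul_assoc, coeff_succ_X_mul]
      have e0 := ih k
      have e1 := ih (k+1)
      have e2 := ih (k+2)
      have e3 := ih (k+3)
      have hn : ((n + 1 : ℕ) : ℚ) ≠ 0 := by positivity
      have key := coeff_derivative (X^k * φ^(n+1+1)) n
      have hd : d⁄dX ℚ φ = 2 + 4 * X + 3 * X^2 := by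
        have h2 : d⁄dX ℚ (2 : PowerSeries ℚ) = 0 := by
          have := Derivation.map_natCast (d⁄dX ℚ) 2
          simpa using this
        rw [hφ]
        simp only [map_add, Derivation.leibniz, Derivation.leibniz_pow, derivative_X, Derivation.map_one_eq_zero, h2]
        simp
        ring
      have hX : X * d⁄dX ℚ (X^k * φ^(n+1+1)) = (k:ℚ) • (X^k * φ^(n+1+1)) +
        ((n+1+1:ℕ):ℚ) • ((2:ℚ) • (X^(k+1) * φ^(n+1)) + (4:ℚ) • (X^(k+2) * φ^(n+1)) + (3:ℚ) • (X^(k+3) * φ^(n+1))) := by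
        simp only [Derivation.leibniz, Derivation.leibniz_pow, derivative_X, hd, smul_eq_C_mul, map_natCast, map_ofNat]
        simp
        cases k with
        | zero => simp; ring
        | succ k => simp; ring
      have hX2 := congrArg (coeff (n+1)) hX
      rw [coeff_succ_X_mul, key] at hX2
      have hφ2 : X^k * φ^(n+1+1) = (X^k * φ^(n+1)) + (2:ℚ) • (X^(k+1) * φ^(n+1)) + (2:ℚ) • (X^(k+2) * φ^(n+1)) + (X^(k+3) * φ^(n+1)) := by
        simp only [lag_two]
        rw [pow_succ φ]; nth_rewrite 2 [hφ]
        ring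
      have hφ3 := congrArg (coeff (n+1)) hφ2
      simp only [map_add, coeff_smul, smul_eq_mul] at hX2 hφ3
      apply mul_left_cancel₀ hn
      push_cast at *
      linear_combination ((n:ℚ)+1+1) * (e0 + 2 * e1 + 2 * e2 + e3) - ((n:ℚ)+1+1) * k * hφ3 - hX2

theorem lag_coeff (n : ℕ) : coeff n ((1 + 2 * X + 2 * X^2 + X^3 : PowerSeries ℚ)^(n+1)) =
   ∑ i ∈ Finset.Icc 1 (n+1), ((n+1).choose i : ℚ) * ((2 * (n+1) - i).choose (i-1)) := by
  have h1 : (1 + 2 * X + 2 * X^2 + X^3 : PowerSeries ℚ)^(n+1) =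
      ∑ j ∈ Finset.range (n+2), ((n+1).choose j : ℚ) • (X^j * (1+X)^(n+1+j)) := by
    have : (1 + 2 * X + 2 * X^2 + X^3 : PowerSeries ℚ) = (1+X) * (X*(1+X) + 1) := by ring
    rw [this, mul_pow, add_pow (X * (1+X)), Finset.mul_sum]
    refine Finset.sum_congr rfl fun j hj => ?_
    rw [smul_eq_C_mul]
    simp only [mul_pow, one_pow, mul_one, map_natCast]
    ring
  rw [h1, map_sum]
  have h2 : ∀ j ∈ Finset.range (n+1), coeff n (((n+1).choose j : ℚ) • (X^j * (1+X)^(n+1+j) : PowerSeries ℚ))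
      = ((n+1).choose j : ℚ) * ((n+1+j).choose (n-j)) := by
    intro j hj
    have hj : j ≤ n := by simpa [Nat.lt_succ_iff] using hj
    rw [coeff_smul, coeff_X_pow_mul', if_pos hj, smul_eq_mul]
    congr 1
    have := Polynomial.coeff_one_add_X_pow ℚ (n+1+j) (n-j)
    rw [← this, ← Polynomial.coeff_coe]
    simp
  rw [Finset.sum_range_succ, Finset.sum_congr rfl h2]
  have h3 : coeff n (((n+1).choose (n+1) : ℚ) • (X^(n+1) * (1+X)^(n+1+(n+1)) : PowerSeries ℚ)) = 0 := by
    rw [coeff_smul, coeff_X_pow_mul']; simp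
  rw [h3, add_zero]
  refine Finset.sum_bij' (fun j _ => n+1-j) (fun i _ => n+1-i) ?_ ?_ ?_ ?_ ?_
  · intro j hj; simp at *; omega
  · intro j hj; simp at *; omega
  · intro j hj; simp at *; omega
  · intro j hj; simp at *; omega
  · intro j hj; simp at hj
    rw [Nat.choose_symm (by omega)]
    congr 3 <;> omega

theorem lag_final (F : PowerSeries ℚ) 
    (hF : (1 - X * F^2) * (F - 1) = X * F) (n : ℕ) (hn : 1 ≤ n) :
    coeff n F = ∑ i ∈ Finset.Icc 1 n,
          (1 / (i : ℚ)) * (Nat.choose (n - 1) (i - 1)) * (Nat.choose (2 * n - i) (i - 1)) := by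
  obtain ⟨n, rfl⟩ : ∃ m, n = m + 1 := ⟨n - 1, by omega⟩
  have h := lag_main (F - 1) (by linear_combination hF) n 1
  rw [pow_one, pow_one, coeff_succ_X_mul, lag_coeff] at h
  have hne : ((n + 1 : ℕ) : ℚ) ≠ 0 := by positivity
  have h1 : coeff (n+1) (F - 1) = coeff (n+1) F := by simp [coeff_one]
  rw [h1] at h
  apply mul_left_cancel₀ hne
  rw [h, Nat.cast_one, one_mul, Finset.mul_sum]
  refine Finset.sum_congr rfl fun i hi => ?_
  obtain ⟨i, rfl⟩ : ∃ m, i = m + 1 := ⟨i - 1, by simp at hi; omega⟩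
  have := Nat.add_one_mul_choose_eq n i
  have h2 : ((n+1 : ℕ):ℚ) * (n.choose i) = (n+1).choose (i+1) * ((i+1 : ℕ):ℚ) := by exact_mod_cast this
  have h3 : ((i + 1 : ℕ) : ℚ) ≠ 0 := by positivity
  simp only [Nat.add_sub_cancel]
  field_simp
  linear_combination (-((2 * (n+1) - (i+1)).choose i : ℚ)) * h2

section
open List

def LGood (l : List ℕ) : Prop := ∀ a b c d, [a,b,c,d] <+ l → ¬ (d < a ∧ a < c ∧ d < b)

open Classical in
noncomputable def LAv (s : Finset ℕ) : Finset (List ℕ) :=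
  s.toList.permutations.toFinset.filter LGood

theorem mem_LAv {s : Finset ℕ} {l : List ℕ} :
    l ∈ LAv s ↔ l.Nodup ∧ (∀ x, x ∈ l ↔ x ∈ s) ∧ LGood l := by
  simp only [LAv, Finset.mem_filter, List.mem_toFinset, List.mem_permutations, ← and_assoc]
  refine and_congr_left fun _ => ⟨fun h => ⟨h.nodup_iff.2 s.nodup_toList, fun x => ?_⟩, fun h => ?_⟩
  · rw [h.mem_iff, Finset.mem_toList]
  · rw [List.perm_ext_iff_of_nodup h.1 s.nodup_toList]
    simpa using h.2

theorem LGood_map {f : ℕ → ℕ} (hf : StrictMono f) (l : List ℕ) : LGood (l.map f) ↔ LGood l := by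
  constructor
  · intro h a b c d hs hh
    exact h (f a) (f b) (f c) (f d) (by simpa using hs.map f)
      ⟨hf hh.1, hf hh.2.1, hf hh.2.2⟩
  · intro h a b c d hs hh
    obtain ⟨l', hl', he⟩ := List.sublist_map_iff.1 hs
    match l', he with
    | [a', b', c', d'], he =>
      simp at he
      obtain ⟨rfl, rfl, rfl, rfl⟩ := he
      exact h a' b' c' d' hl' ⟨hf.lt_iff_lt.1 hh.1, hf.lt_iff_lt.1 hh.2.1, hf.lt_iff_lt.1 hh.2.2⟩

theorem card_LAv_image {f : ℕ → ℕ} (hf : StrictMono f) (s : Finset ℕ) :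
    (LAv (s.image f)).card = (LAv s).card := by
  have : LAv (s.image f) = (LAv s).image (List.map f) := by
    ext l
    simp only [Finset.mem_image]
    constructor
    · intro h
      have h' := mem_LAv.1 h
      have : l ∈ Set.range (List.map f) := by
        rw [Set.range_list_map]
        intro x hx
        have := (h'.2.1 x).1 hx
        rw [Finset.mem_image] at this
        obtain ⟨y, _, rfl⟩ := this
        exact ⟨y, rfl⟩
      obtain ⟨l', rfl⟩ := this
      refine ⟨l', mem_LAv.2 ⟨h'.1.of_map, fun x => ?_, (LGood_map hf _).1 h'.2.2⟩, rfl⟩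
      have := h'.2.1 (f x)
      simpa [hf.injective.eq_iff] using this
    · rintro ⟨l', h, rfl⟩
      have h' := mem_LAv.1 h
      refine mem_LAv.2 ⟨h'.1.map hf.injective, fun x => ?_, (LGood_map hf _).2 h'.2.2⟩
      simp [h'.2.1]
  rw [this, Finset.card_image_of_injective _ (List.map_injective_iff.2 hf.injective)]

noncomputable def LA (n : ℕ) : ℕ := (LAv (Finset.range n)).card

def Lset (p s : ℕ) : Finset ℕ := insert (p+s) (Finset.range p)

theorem card_Lset (p s : ℕ) : (LAv (Lset p s)).card = LA (p+1) := by
  rw [LA, ← card_LAv_image (s := Finset.range (p+1)) (f := fun i => if i < p then i else i + s)]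
  · congr 2
    ext x
    simp only [Lset, Finset.mem_insert, Finset.mem_range, Finset.mem_image]
    constructor
    · rintro (rfl | h)
      · exact ⟨p, by simp⟩
      · exact ⟨x, by omega, by simp [h]⟩
    · rintro ⟨a, ha, rfl⟩
      split_ifs <;> omega
  · intro a b h
    simp only
    split_ifs <;> omega

theorem card_Ico_LAv (p s : ℕ) : (LAv (Finset.Ico p (p+s))).card = LA s := by
  rw [LA, ← card_LAv_image (s := Finset.range s) (f := fun i => i + p)]
  · congr 2
    ext x
    simp only [Finset.mem_Ico, Finset.mem_range, Finset.mem_image]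
    constructor
    · intro h
      exact ⟨x - p, by omega, by omega⟩
    · rintro ⟨a, ha, rfl⟩
      omega
  · intro a b h
    simp only
    omega

theorem sub4 {a b c d : ℕ} {A B : List ℕ} (h : [a,b,c,d] <+ A ++ B) :
    [a,b,c,d] <+ A ∨ ([a,b,c] <+ A ∧ d ∈ B) ∨ ([a,b] <+ A ∧ [c,d] <+ B) ∨
    (a ∈ A ∧ [b,c,d] <+ B) ∨ [a,b,c,d] <+ B := by
  obtain ⟨l1, l2, he, h1, h2⟩ := List.sublist_append_iff.1 h
  match l1, he with
  | [], he => simp at he; subst he; simp [h2]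
  | [_], he => simp at he; obtain ⟨rfl, rfl⟩ := he; simp at h1; simp [h1, h2]
  | [_,_], he => simp at he; obtain ⟨rfl, rfl, rfl⟩ := he; simp [h1, h2]
  | [_,_,_], he => simp at he; obtain ⟨rfl, rfl, rfl, rfl⟩ := he; simp at h2; simp [h1, h2]
  | [_,_,_,_], he => simp at he; obtain ⟨rfl, rfl, rfl, rfl, rfl⟩ := he; simp [h1]

theorem sub2 {c d : ℕ} {A B : List ℕ} (h : [c,d] <+ A ++ B) :
    [c,d] <+ A ∨ (c ∈ A ∧ d ∈ B) ∨ [c,d] <+ B := by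
  obtain ⟨l1, l2, he, h1, h2⟩ := List.sublist_append_iff.1 h
  match l1, he with
  | [], he => simp at he; subst he; simp [h2]
  | [_], he => simp at he; obtain ⟨rfl, rfl⟩ := he; simp at h1 h2; simp [h1, h2]
  | [_,_], he => simp at he; obtain ⟨rfl, rfl, rfl⟩ := he; simp [h1]

theorem LGood.sub {l l' : List ℕ} (h : LGood l) (hs : l' <+ l) : LGood l' :=
  fun a b c d h' => h a b c d (h'.trans hs)

theorem LGood_cons {n : ℕ} {R : List ℕ} (h : LGood R) (hn : ∀ x ∈ R, x < n) : LGood (n :: R) := by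
  intro a b c d hs hh
  rw [List.cons_sublist_cons'] at hs
  rcases hs with hs | ⟨rfl, hs⟩
  · exact h a b c d hs hh
  · have := hn c (hs.subset (by simp))
    omega

/-- assembling -/
theorem LGood_build {L S G : List ℕ} {p s n : ℕ} (hL : L ∈ LAv (Lset p s))
    (hS : S ∈ LAv (Finset.Ico p (p+s))) (hG : G ∈ LAv (Finset.Ico (p+s+1) n)) (hn : p + s < n) :
    L ++ n :: (S ++ G) ∈ LAv (Finset.range (n+1)) := by
  obtain ⟨nL, mL, gL⟩ := mem_LAv.1 hL
  obtain ⟨nS, mS, gS⟩ := mem_LAv.1 hS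
  obtain ⟨nG, mG, gG⟩ := mem_LAv.1 hG
  simp only [Lset, Finset.mem_insert, Finset.mem_range, Finset.mem_Ico] at mL mS mG
  have gSG : LGood (S ++ G) := by
    intro a b c d hs hh
    rcases sub4 hs with h | ⟨h, hd⟩ | ⟨h, h'⟩ | ⟨h, h'⟩ | h
    · exact gS a b c d h hh
    · have := (mS a).1 (h.subset (by simp)); have := (mG d).1 hd; omega
    · have := (mS a).1 (h.subset (by simp)); have := (mG d).1 (h'.subset (by simp)); omega
    · have := (mS a).1 h; have := (mG d).1 (h'.subset (by simp)); omega
    · exact gG a b c d h hh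
  have hR : ∀ x ∈ S ++ G, p ≤ x ∧ x < n := by
    intro x hx
    rw [List.mem_append, mS, mG] at hx
    omega
  have hR' : ∀ x ∈ n :: (S ++ G), p ≤ x ∧ x ≤ n := by
    intro x hx
    rw [List.mem_cons] at hx
    rcases hx with rfl | hx
    · omega
    · have := hR x hx; omega
  refine mem_LAv.2 ⟨?_, ?_, ?_⟩
  · rw [List.nodup_append, List.nodup_cons, List.nodup_append]
    refine ⟨nL, ⟨fun h => by have := hR _ h; omega, nS, nG, ?_⟩, ?_⟩
    · intro a ha b hb
      rw [mS] at ha; rw [mG] at hb; omega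
    · intro a ha b hb
      rw [mL] at ha
      simp only [List.mem_cons, List.mem_append, mS, mG] at hb
      omega
  · intro x
    simp only [List.mem_cons, List.mem_append, mS, mG, mL, Finset.mem_range]
    omega
  · intro a b c d hs hh
    rcases sub4 hs with h | ⟨h, hd⟩ | ⟨h, h'⟩ | ⟨h, h'⟩ | h
    · exact gL a b c d h hh
    · have := (mL a).1 (h.subset (by simp))
      have := (mL c).1 (h.subset (by simp))
      have := hR' d hd
      omega
    · have h1 := (mL a).1 (h.subset (by simp))
      have h2 := (mL b).1 (h.subset (by simp))
      have h3 := hR' d (h'.subset (by simp))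
      have : a ≠ b := by
        have := nL.sublist h
        simpa using this
      omega
    · have h1 := (mL a).1 h
      have h3 := hR' d (h'.subset (by simp))
      have h4 : [c, d] <+ S ++ G := by simpa using h'.tail
      rcases sub2 h4 with h5 | ⟨h5, h6⟩ | h5
      · have := (mS c).1 (h5.subset (by simp)); omega
      · have := (mS c).1 h5; omega
      · have := (mG d).1 (h5.subset (by simp)); omega
    · exact LGood_cons gSG (fun x hx => (hR x hx).2) a b c d h hh

theorem split_filter (m : ℕ) (R : List ℕ) (h : ∀ b v, [b,v] <+ R → ¬ (v < m ∧ m ≤ b)) :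
    R.filter (fun x => decide (x < m)) ++ R.filter (fun x => decide (m ≤ x)) = R := by
  induction R with
  | nil => rfl
  | cons x R ih =>
    have ih := ih (fun b v hs => h b v (hs.cons x))
    by_cases hx : x < m
    · have : ¬ m ≤ x := by omega
      simp [hx, this, ih]
    · have hx' : m ≤ x := by omega
      have h1 : R.filter (fun x => decide (x < m)) = [] := by
        rw [List.filter_eq_nil_iff]
        intro y hy hy'
        exact h x y (by simpa using hy) ⟨by simpa using hy', hx'⟩
      rw [h1] at ih
      simp [hx, hx', h1]
      simpa using ih

theorem LGood_split {l : List ℕ} {n : ℕ} (hl : l ∈ LAv (Finset.range (n+1))) :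
    (∃ R ∈ LAv (Finset.range n), l = n :: R) ∨
    ∃ p s, p + s < n ∧ ∃ L ∈ LAv (Lset p s), ∃ S ∈ LAv (Finset.Ico p (p+s)),
      ∃ G ∈ LAv (Finset.Ico (p+s+1) n), l = L ++ n :: (S ++ G) := by
  obtain ⟨nl, ml, gl⟩ := mem_LAv.1 hl
  obtain ⟨L, R, rfl⟩ := List.append_of_mem ((ml n).2 (by simp))
  simp only [List.mem_append, List.mem_cons, Finset.mem_range] at ml
  have nl' := nl
  rw [List.nodup_append, List.nodup_cons] at nl
  obtain ⟨nL, ⟨nnR, nR⟩, nLR⟩ := nl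
  have hRn : ∀ x ∈ R, x < n := by
    intro x hx
    have := (ml x).1 (by simp [hx])
    have : x ≠ n := by rintro rfl; exact nnR hx
    omega
  have hLn : ∀ x ∈ L, x < n := by
    intro x hx
    have := (ml x).1 (by simp [hx])
    have := nLR x hx n (by simp)
    omega
  by_cases hL0 : L = []
  · left
    subst hL0
    refine ⟨R, mem_LAv.2 ⟨nR, fun x => ?_, gl.sub (by simp)⟩, rfl⟩
    rw [Finset.mem_range]
    refine ⟨hRn x, fun hx => ?_⟩
    have := (ml x).2 (by omega)
    rcases this with h | h | h
    · simp at h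
    · omega
    · exact h
  right
  have hne : L.toFinset.Nonempty := by simpa using hL0
  obtain ⟨m, hmL, hmax⟩ : ∃ m ∈ L, ∀ x ∈ L, x ≤ m :=
    ⟨L.toFinset.max' hne, by simpa using L.toFinset.max'_mem hne,
      fun x hx => L.toFinset.le_max' x (by simpa using hx)⟩
  have hmn := hLn m hmL
  have hlow : ∀ a ∈ L, a ≠ m → ∀ v ∈ R, a < v := by
    intro a ha ham v hv
    by_contra hlt
    have hav := nLR a ha v (by simp [hv])
    have ham' := hmax a ha
    have hvn : [n, v] <+ n :: R := by simpa using hv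
    have h2 : [a, m] <+ L ∨ [m, a] <+ L := by
      obtain ⟨A, B, rfl⟩ := List.append_of_mem ha
      simp only [List.mem_append, List.mem_cons] at hmL
      rcases hmL with h | h | h
      · right
        exact (List.singleton_sublist.2 h).append (List.singleton_sublist.2 (by simp) : [a] <+ a :: B)
      · exact absurd h.symm ham
      · left
        exact ((List.singleton_sublist.2 h).cons_cons a).trans (List.sublist_append_right _ _)
    rcases h2 with h2 | h2
    · exact gl a m n v (h2.append hvn) (by omega)
    · exact gl m a n v (h2.append hvn) (by omega)
  have hRm : m ∉ R := fun h => nLR m hmL m (by simp [h]) rfl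
  have hsp := split_filter m R (by
    intro b v hs hh
    have hb : b ≠ m := by rintro rfl; exact hRm (hs.subset (by simp))
    have hv := hRn v (hs.subset (by simp))
    exact gl m n b v ((List.singleton_sublist.2 hmL).append (hs.cons_cons n)) (by omega))
  have hex : ∃ x, x ∉ L ∨ x = m := ⟨m, Or.inr rfl⟩
  classical
  obtain ⟨p, hp, hpmin⟩ : ∃ p, (p ∉ L ∨ p = m) ∧ ∀ q < p, q ∈ L ∧ q ≠ m :=
    ⟨Nat.find hex, Nat.find_spec hex, fun q hq => by simpa using Nat.find_min hex hq⟩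
  have hpm : p ≤ m := by
    by_contra h
    exact (hpmin m (by omega)).2 rfl
  have hLp : ∀ x ∈ L, x ≠ m → x < p := by
    intro x hx hxm
    by_contra h
    have := hmax x hx
    have hpm' : p ≠ m := by omega
    have hpL : p ∉ L := by tauto
    have hpR : p ∈ R := by
      have := (ml p).2 (by omega)
      rcases this with h | h | h
      · exact absurd h hpL
      · omega
      · exact h
    have := hlow x hx hxm p hpR
    omega
  have hmid : ∀ x, x ∈ R ↔ (p ≤ x ∧ x < n ∧ x ≠ m) := by
    intro x
    constructor
    · intro hx
      refine ⟨?_, hRn x hx, by rintro rfl; exact hRm hx⟩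
      by_contra h
      exact nLR x (hpmin x (by omega)).1 x (by simp [hx]) rfl
    · rintro ⟨h1, h2, h3⟩
      rcases (ml x).2 (by omega) with h | h | h
      · have := hLp x h h3; omega
      · omega
      · exact h
  obtain ⟨s, rfl⟩ : ∃ s, m = p + s := ⟨m - p, by omega⟩
  have gR : LGood R := gl.sub ((List.sublist_cons_self n R).trans (List.sublist_append_right _ _))
  refine ⟨p, s, hmn, L, mem_LAv.2 ⟨nL, fun x => ?_, gl.sub (List.sublist_append_left _ _)⟩,
    R.filter (fun x => decide (x < p+s)), mem_LAv.2 ⟨nR.filter _, fun x => ?_, gR.sub List.filter_sublist⟩,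
    R.filter (fun x => decide (p+s ≤ x)), mem_LAv.2 ⟨nR.filter _, fun x => ?_, gR.sub List.filter_sublist⟩, by rw [hsp]⟩
  · simp only [Lset, Finset.mem_insert, Finset.mem_range]
    constructor
    · intro h
      by_cases hx : x = p + s
      · exact Or.inl hx
      · exact Or.inr (hLp x h hx)
    · rintro (rfl | h)
      · exact hmL
      · exact (hpmin x h).1
  · rw [List.mem_filter, hmid, Finset.mem_Ico]; simp; omega
  · rw [List.mem_filter, hmid, Finset.mem_Ico]; simp; omega

theorem app_inj {n : ℕ} {L R L' R' : List ℕ} (h : n ∉ L) (h' : n ∉ L')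
    (he : L ++ n :: R = L' ++ n :: R') : L = L' ∧ R = R' := by
  induction L generalizing L' with
  | nil =>
    cases L' with
    | nil => simpa using he
    | cons x L' => simp at he h'; omega
  | cons y L ih =>
    cases L' with
    | nil => simp at he h; omega
    | cons x L' =>
      simp at he h h'
      have := ih h.2 h'.2 he.2
      simp [he.1, this]

theorem LA_rec (k : ℕ) : LA (k+2) = LA (k+1) +
    ∑ x ∈ Finset.HasAntidiagonal.antidiagonal k, ∑ y ∈ Finset.HasAntidiagonal.antidiagonal x.2, LA (x.1+1) * (LA y.1 * LA y.2) := by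
  classical
  let I : Finset (Σ _ : ℕ × ℕ, ℕ × ℕ) := (Finset.HasAntidiagonal.antidiagonal k).sigma (fun x => Finset.HasAntidiagonal.antidiagonal x.2)
  let D : (Σ _ : ℕ × ℕ, ℕ × ℕ) → Finset (List ℕ × (List ℕ × List ℕ)) := fun i =>
    LAv (Lset i.1.1 i.2.1) ×ˢ (LAv (Finset.Ico i.1.1 (i.1.1 + i.2.1)) ×ˢ
      LAv (Finset.Ico (i.1.1 + i.2.1 + 1) (k+1)))
  let φ : List ℕ × (List ℕ × List ℕ) → List ℕ := fun t => t.1 ++ (k+1) :: (t.2.1 ++ t.2.2)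
  have hI : ∀ i ∈ I, i.1.1 + i.2.1 + i.2.2 = k ∧ i.1.2 = i.2.1 + i.2.2 := by
    rintro ⟨⟨a, b⟩, ⟨c, d⟩⟩ h
    simp [I] at h
    simp; omega
  have hnot : ∀ i ∈ I, ∀ t ∈ D i, (k+1) ∉ t.1 := by
    intro i hi t ht hk
    have := hI i hi
    simp only [D, Finset.mem_product, mem_LAv, Lset, Finset.mem_insert, Finset.mem_range] at ht
    have := (ht.1.2.1 _).1 hk
    omega
  have hmem : ∀ i, ∀ t ∈ D i, ∀ x, x ∈ t.1 ↔ (x = i.1.1 + i.2.1 ∨ x < i.1.1) := by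
    intro i t ht x
    simp only [D, Finset.mem_product, mem_LAv, Lset, Finset.mem_insert, Finset.mem_range] at ht
    exact ht.1.2.1 x
  have hU : LAv (Finset.range (k+2)) =
      (LAv (Finset.range (k+1))).image (List.cons (k+1)) ∪ I.biUnion (fun i => (D i).image φ) := by
    ext l
    simp only [Finset.mem_union, Finset.mem_image, Finset.mem_biUnion]
    constructor
    · intro h
      rcases LGood_split h with ⟨R, hR, rfl⟩ | ⟨p, s, hps, L, hL, S, hS, G, hG, rfl⟩
      · exact Or.inl ⟨R, hR, rfl⟩
      · right
        refine ⟨⟨(p, k - p), (s, k - p - s)⟩, ?_, (L, S, G), ?_, rfl⟩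
        · simp [I]; omega
        · simp only [D, Finset.mem_product]
          exact ⟨hL, hS, hG⟩
    · rintro (⟨R, hR, rfl⟩ | ⟨i, hi, ⟨L, S, G⟩, ht, rfl⟩)
      · obtain ⟨h1, h2, h3⟩ := mem_LAv.1 hR
        simp only [Finset.mem_range] at h2
        refine mem_LAv.2 ⟨?_, fun x => ?_, LGood_cons h3 (fun x hx => (h2 x).1 hx)⟩
        · rw [List.nodup_cons, h2]; exact ⟨by omega, h1⟩
        · rw [List.mem_cons, h2, Finset.mem_range]; omega
      · simp only [D, Finset.mem_product] at ht
        have := hI i hi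
        exact LGood_build ht.1 ht.2.1 ht.2.2 (by omega)
  rw [LA, hU, Finset.card_union_of_disjoint, Finset.card_image_of_injective _ (List.cons_injective),
    Finset.card_biUnion]
  · congr 1
    rw [Finset.sum_sigma']
    refine Finset.sum_congr rfl fun i hi => ?_
    rw [Finset.card_image_of_injOn]
    · simp only [D, Finset.card_product, card_Lset, card_Ico_LAv]
      have := hI i hi
      have h2 : k + 1 = i.1.1 + i.2.1 + 1 + i.2.2 := by omega
      rw [h2, card_Ico_LAv]
    · rintro ⟨L, S, G⟩ ht ⟨L', S', G'⟩ ht' he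
      have := app_inj (hnot i hi _ ht) (hnot i hi _ ht') he
      have hlen : S.length = S'.length := by
        simp only [D, Finset.coe_product, Set.mem_prod, Finset.mem_coe, mem_LAv] at ht ht'
        exact ((List.perm_ext_iff_of_nodup ht.2.1.1 ht'.2.1.1).2
          (fun x => by rw [ht.2.1.2.1, ht'.2.1.2.1])).length_eq
      have h2 := List.append_inj this.2 hlen
      simp only [Prod.mk.injEq]
      exact ⟨this.1, h2.1, h2.2⟩
  · intro i hi j hj hij
    rw [Function.onFun, Finset.disjoint_left]
    intro l hl hl'
    rw [Finset.mem_image] at hl hl'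
    obtain ⟨t, ht, rfl⟩ := hl
    obtain ⟨t', ht', he⟩ := hl'
    have := app_inj (hnot j hj _ ht') (hnot i hi _ ht) he
    have e : ∀ x, (x = i.1.1 + i.2.1 ∨ x < i.1.1) ↔ (x = j.1.1 + j.2.1 ∨ x < j.1.1) := by
      intro x
      rw [← hmem i t ht, ← hmem j t' ht', this.1]
    apply hij
    have a1 := hI i hi
    have a2 := hI j hj
    have e1 := (e (i.1.1 + i.2.1)).1 (Or.inl rfl)
    have e2 := (e (j.1.1 + j.2.1)).2 (Or.inl rfl)
    have e3 := fun h => (e (i.1.1)).2 (Or.inr h)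
    have e4 := fun h => (e (j.1.1)).1 (Or.inr h)
    clear e hij ht ht'
    obtain ⟨⟨a, b⟩, ⟨c, d⟩⟩ := i
    obtain ⟨⟨a', b'⟩, ⟨c', d'⟩⟩ := j
    simp only at a1 a2 e1 e2 e3 e4
    have : a = a' := by omega
    have : c = c' := by omega
    have : d = d' := by omega
    have : b = b' := by omega
    subst_vars
    rfl
  · rw [Finset.disjoint_left]
    intro l hl hl'
    simp only [Finset.mem_image, Finset.mem_biUnion] at hl hl'
    obtain ⟨R, hR, rfl⟩ := hl
    obtain ⟨i, hi, t, ht, he⟩ := hl'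
    have := app_inj (L := t.1) (L' := []) (hnot i hi t ht) (by simp) he
    have h2 := (hmem i t ht (i.1.1 + i.2.1)).2 (Or.inl rfl)
    rw [this.1] at h2
    simp at h2

end

theorem sub_ofFn {n : ℕ} (g : Fin n → ℕ) (a b c d : ℕ) :
    ([a,b,c,d] : List ℕ).Sublist (List.ofFn g) ↔
    ∃ i j k m : Fin n, i < j ∧ j < k ∧ k < m ∧ g i = a ∧ g j = b ∧ g k = c ∧ g m = d := by
  rw [List.sublist_iff_exists_fin_orderEmbedding_get_eq]
  have hlen : (List.ofFn g).length = n := List.length_ofFn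
  constructor
  · rintro ⟨f, hf⟩
    have h0 := hf ⟨0, by simp⟩
    have h1 := hf ⟨1, by simp⟩
    have h2 := hf ⟨2, by simp⟩
    have h3 := hf ⟨3, by simp⟩
    simp at h0 h1 h2 h3
    refine ⟨Fin.cast hlen (f ⟨0, by simp⟩), Fin.cast hlen (f ⟨1, by simp⟩),
      Fin.cast hlen (f ⟨2, by simp⟩), Fin.cast hlen (f ⟨3, by simp⟩), ?_, ?_, ?_, ?_, ?_, ?_, ?_⟩
    · exact f.strictMono (by simp)
    · exact f.strictMono (by simp)
    · exact f.strictMono (by simp)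
    · rw [h0]; rfl
    · rw [h1]; rfl
    · rw [h2]; rfl
    · rw [h3]; rfl
  · rintro ⟨i, j, k, m, hij, hjk, hkm, rfl, rfl, rfl, rfl⟩
    refine ⟨OrderEmbedding.ofStrictMono (fun x : Fin 4 => Fin.cast hlen.symm ((![i,j,k,m] : Fin 4 → Fin n) x)) ?_, ?_⟩
    · rw [Fin.strictMono_iff_lt_succ]
      intro x
      fin_cases x
      · exact hij
      · exact hjk
      · exact hkm
    · intro ix
      change Fin 4 at ix
      fin_cases ix <;> simp

theorem contains_iff {n : ℕ} (π : Equiv.Perm (Fin n)) (σ : Fin 4 → Fin 4) :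
    ContainsPattern π σ ↔ ∃ i j k m : Fin n, i < j ∧ j < k ∧ k < m ∧
      ∀ a b : Fin 4, σ a < σ b ↔ π ((![i,j,k,m] : Fin 4 → Fin n) a) < π ((![i,j,k,m] : Fin 4 → Fin n) b) := by
  constructor
  · rintro ⟨f, hf⟩
    refine ⟨f 0, f 1, f 2, f 3, f.strictMono (by decide), f.strictMono (by decide),
      f.strictMono (by decide), ?_⟩
    have : (![f 0, f 1, f 2, f 3] : Fin 4 → Fin n) = f := by
      funext x; fin_cases x <;> rfl
    rw [this]; exact hf
  · rintro ⟨i, j, k, m, hij, hjk, hkm, h⟩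
    refine ⟨OrderEmbedding.ofStrictMono (![i,j,k,m] : Fin 4 → Fin n) ?_, h⟩
    rw [Fin.strictMono_iff_lt_succ]
    intro x
    fin_cases x
    · exact hij
    · exact hjk
    · exact hkm

theorem avoid_iff {n : ℕ} (π : Equiv.Perm (Fin n)) :
    (∀ σ ∈ ({![1,2,3,0], ![1,3,2,0], ![2,1,3,0]} : Set (Fin 4 → Fin 4)), ¬ ContainsPattern π σ) ↔
    LGood (List.ofFn (fun i => (π i : ℕ))) := by
  constructor
  · intro h a b c d hs hh
    obtain ⟨i, j, k, m, hij, hjk, hkm, rfl, rfl, rfl, rfl⟩ := (sub_ofFn _ _ _ _ _).1 hs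
    have d1 : (π i : ℕ) ≠ π j := fun e => hij.ne (π.injective (Fin.ext e))
    have d2 : (π j : ℕ) ≠ π k := fun e => hjk.ne (π.injective (Fin.ext e))
    replace d1 : π i ≠ π j := fun e => d1 (congrArg _ e)
    replace d2 : π j ≠ π k := fun e => d2 (congrArg _ e)
    obtain ⟨hh1, hh2, hh3⟩ := hh
    rw [Fin.val_fin_lt] at hh1 hh2 hh3
    rcases lt_or_gt_of_ne d1 with h1 | h1
    · rcases lt_or_gt_of_ne d2 with h2 | h2
      · refine h ![1,2,3,0] (by simp) ((contains_iff _ _).2 ⟨i, j, k, m, hij, hjk, hkm, ?_⟩)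
        intro a b
        fin_cases a <;> fin_cases b <;> simp <;> order
      · refine h ![1,3,2,0] (by simp) ((contains_iff _ _).2 ⟨i, j, k, m, hij, hjk, hkm, ?_⟩)
        intro a b
        fin_cases a <;> fin_cases b <;> simp <;> order
    · refine h ![2,1,3,0] (by simp) ((contains_iff _ _).2 ⟨i, j, k, m, hij, hjk, hkm, ?_⟩)
      intro a b
      fin_cases a <;> fin_cases b <;> simp <;> order
  · intro h σ hσ hc
    obtain ⟨i, j, k, m, hij, hjk, hkm, hp⟩ := (contains_iff _ _).1 hc
    refine h _ _ _ _ ((sub_ofFn _ _ _ _ _).2 ⟨i, j, k, m, hij, hjk, hkm, rfl, rfl, rfl, rfl⟩) ?_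
    have h1 := hp 3 0
    have h2 := hp 0 2
    have h3 := hp 3 1
    simp at h1 h2 h3
    simp only [Set.mem_insert_iff, Set.mem_singleton_iff] at hσ
    rcases hσ with rfl | rfl | rfl
    · exact ⟨h1.1 (by decide), h2.1 (by decide), h3.1 (by decide)⟩
    · exact ⟨h1.1 (by decide), h2.1 (by decide), h3.1 (by decide)⟩
    · exact ⟨h1.1 (by decide), h2.1 (by decide), h3.1 (by decide)⟩

theorem count_eq (n : ℕ) :
    avoiderCount ({![1,2,3,0], ![1,3,2,0], ![2,1,3,0]} : Set (Fin 4 → Fin 4)) n = LA n := by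
  rw [avoiderCount, LA, ← Nat.card_eq_finsetCard]
  refine Nat.card_congr (Equiv.ofBijective
    (fun π => ⟨List.ofFn (fun i => (π.1 i : ℕ)), mem_LAv.2 ⟨?_, ?_, (avoid_iff _).1 π.2⟩⟩) ⟨?_, ?_⟩)
  · rw [List.nodup_ofFn]
    exact Fin.val_injective.comp π.1.injective
  · intro x
    rw [List.mem_ofFn', Finset.mem_range]
    constructor
    · rintro ⟨i, rfl⟩
      exact (π.1 i).2
    · intro hx
      exact ⟨π.1.symm ⟨x, hx⟩, by simp⟩
  · rintro ⟨π, hπ⟩ ⟨π', hπ'⟩ he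
    have he := List.ofFn_injective (congrArg Subtype.val he)
    apply Subtype.ext
    apply Equiv.ext
    intro i
    exact Fin.ext (congrFun he i)
  · rintro ⟨l, hl⟩
    obtain ⟨h1, h2, h3⟩ := mem_LAv.1 hl
    have hlen : l.length = n := by
      have : l.toFinset = Finset.range n := by
        ext x; rw [List.mem_toFinset, h2]
      rw [← List.toFinset_card_of_nodup h1, this, Finset.card_range]
    subst hlen
    let g : Fin l.length → Fin l.length := fun i =>
      ⟨l.get i, by simpa using (h2 (l.get i)).1 (List.get_mem _ _)⟩
    have hg : Function.Injective g := by
      intro i j hij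
      exact (List.nodup_iff_injective_get.1 h1) (congrArg Fin.val hij)
    have hl' : List.ofFn (fun i => ((Equiv.ofBijective g (Finite.injective_iff_bijective.1 hg) i : Fin l.length) : ℕ)) = l :=
      List.ofFn_get l
    refine ⟨⟨Equiv.ofBijective g (Finite.injective_iff_bijective.1 hg), (avoid_iff _).2 ?_⟩, Subtype.ext hl'⟩
    rw [hl']; exact h3

theorem LA_zero : LA 0 = 1 := by
  rw [LA, Finset.card_eq_one]
  refine ⟨[], ?_⟩
  ext l
  rw [mem_LAv, Finset.mem_singleton]
  constructor
  · rintro ⟨_, h, _⟩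
    exact List.eq_nil_iff_forall_not_mem.2 (fun x hx => by simpa using (h x).1 hx)
  · rintro rfl
    refine ⟨List.nodup_nil, by simp, ?_⟩
    intro a b c d hs
    simp at hs

theorem LA_one : LA 1 = 1 := by
  have : LAv (Finset.range 1) = (LAv (Finset.range 0)).image (List.cons 0) := by
    ext l
    rw [Finset.mem_image]
    constructor
    · intro h
      rcases LGood_split h with ⟨R, hR, rfl⟩ | ⟨p, s, hps, _⟩
      · exact ⟨R, hR, rfl⟩
      · omega
    · rintro ⟨R, hR, rfl⟩
      obtain ⟨h1, h2, h3⟩ := mem_LAv.1 hR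
      simp only [Finset.mem_range] at h2
      refine mem_LAv.2 ⟨?_, fun x => ?_, LGood_cons h3 (fun x hx => (h2 x).1 hx)⟩
      · rw [List.nodup_cons, h2]; exact ⟨by omega, h1⟩
      · rw [List.mem_cons, h2, Finset.mem_range]; omega
  rw [LA, this, Finset.card_image_of_injective _ List.cons_injective]
  exact LA_zero

theorem gf_eq (F : PowerSeries ℚ) (hF : ∀ n, coeff n F = (LA n : ℚ)) :
    (1 - X * F^2) * (F - 1) = X * F := by
  have h1 : F = 1 + X * PowerSeries.mk (fun n => (LA (n+1) : ℚ)) := by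
    ext n
    cases n with
    | zero => rw [hF]; simp [LA_zero]
    | succ n => rw [map_add, coeff_succ_X_mul, hF]; simp [coeff_one]
  have h2 : PowerSeries.mk (fun n => (LA (n+1) : ℚ)) =
      F + X * (PowerSeries.mk (fun n => (LA (n+1) : ℚ)) * (F * F)) := by
    ext n
    cases n with
    | zero =>
      have := hF 0
      rw [coeff_zero_eq_constantCoeff] at this
      simp [this, LA_zero, LA_one]
    | succ k =>
      rw [map_add, coeff_succ_X_mul, hF, coeff_mk, LA_rec, coeff_mul]
      push_cast
      congr 1
      refine Finset.sum_congr rfl fun x _ => ?_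
      rw [coeff_mul, coeff_mk, Finset.mul_sum]
      refine Finset.sum_congr rfl fun y _ => ?_
      rw [hF, hF]
  linear_combination (1 - X * F^2) * h1 + X * h2

theorem statement_19 :
    (∀ n : ℕ, 1 ≤ n →
      (avoiderCount ({![1,2,3,0], ![1,3,2,0], ![2,1,3,0]} : Set (Fin 4 → Fin 4)) n : ℚ) =
        ∑ i ∈ Finset.Icc 1 n,
          (1 / (i : ℚ)) * (Nat.choose (n - 1) (i - 1)) * (Nat.choose (2 * n - i) (i - 1))) ∧
    (1 - X * (avoiderGF ({![1,2,3,0], ![1,3,2,0], ![2,1,3,0]} : Set (Fin 4 → Fin 4)))^2) *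
        (avoiderGF ({![1,2,3,0], ![1,3,2,0], ![2,1,3,0]} : Set (Fin 4 → Fin 4)) - 1) =
      X * avoiderGF ({![1,2,3,0], ![1,3,2,0], ![2,1,3,0]} : Set (Fin 4 → Fin 4)) := by
  have hF : ∀ n, coeff n (avoiderGF ({![1,2,3,0], ![1,3,2,0], ![2,1,3,0]} : Set (Fin 4 → Fin 4)))
      = (LA n : ℚ) := by
    intro n
    rw [avoiderGF, coeff_mk, count_eq]
  refine ⟨fun n hn => ?_, gf_eq _ hF⟩
  rw [← lag_final _ (gf_eq _ hF) n hn, hF, count_eq]
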